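/- Fix β with 0 < β < 1/2 and J ≥ 0 with βJ < 1/2. Let σ and σ' be independent, each uniformly distributed on {−1,+1}^n, let δ_n → 0 with √n·δ_n → ∞, and set Ω_n := { τ ∈ {−1,+1}^n : |Σ_{i=1}^n τ_i| ≤ n δ_n }. Then E[ 1_{σ ∈ Ω_n} · 1_{σ' ∈ Ω_n} · exp{ (2β²/n)(Σ_{i=1}^n σ_i σ'_i)² + (βJ/n)(Σ_{i=1}^n σ_i)² + (βJ/n)(Σ_{i=1}^n σ'_i)² } ] → 1/( √(1 − 4β²) · (1 − 2βJ) ) as n → ∞. -/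

import Mathlib

open MeasureTheory Filter Finset Topology

noncomputable section

/-- The spin value of a Boolean. -/
def spin (b : Bool) : ℝ := if b then 1 else -1

/-- Sum of spins. -/
def spinSum (n : ℕ) (σ : Fin n → Bool) : ℝ := ∑ i : Fin n, spin (σ i)

/-- Overlap of two configurations. -/
def overlapSum (n : ℕ) (σ σ' : Fin n → Bool) : ℝ := ∑ i : Fin n, spin (σ i) * spin (σ' i)

/-- The linear exponential tilt. -/
def tilt (n : ℕ) (p q r : ℝ) (σ σ' : Fin n → Bool) : ℝ :=
  Real.exp ((p * overlapSum n σ σ' + q * spinSum n σ + r * spinSum n σ') / Real.sqrt n)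

/-- The joint moment generating function. -/
def jointMgf (n : ℕ) (p q r : ℝ) : ℝ :=
  ((2 : ℝ) ^ n)⁻¹ * ((2 : ℝ) ^ n)⁻¹ * ∑ σ : Fin n → Bool, ∑ σ' : Fin n → Bool, tilt n p q r σ σ'

/-- The truncated joint moment generating function. -/
def truncMgf (n : ℕ) (d p q r : ℝ) : ℝ :=
  ((2 : ℝ) ^ n)⁻¹ * ((2 : ℝ) ^ n)⁻¹ * ∑ σ : Fin n → Bool, ∑ σ' : Fin n → Bool,
    if |spinSum n σ| ≤ n * d ∧ |spinSum n σ'| ≤ n * d then tilt n p q r σ σ' else 0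

lemma jointMgf_eq (n : ℕ) (p q r : ℝ) :
    jointMgf n p q r = (1 + (1 / 4) *
      ((Real.exp ((p + q + r) / Real.sqrt n) - 1 - (p + q + r) / Real.sqrt n)
      + (Real.exp ((-p + q - r) / Real.sqrt n) - 1 - (-p + q - r) / Real.sqrt n)
      + (Real.exp ((-p - q + r) / Real.sqrt n) - 1 - (-p - q + r) / Real.sqrt n)
      + (Real.exp ((p - q - r) / Real.sqrt n) - 1 - (p - q - r) / Real.sqrt n))) ^ n := by
  have h := Fintype.sum_pow (fun b : Bool × Bool => Real.exp ((p * (spin b.1 * spin b.2)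
    + q * spin b.1 + r * spin b.2) / Real.sqrt n)) n
  have h2 : (∑ σ : Fin n → Bool, ∑ σ' : Fin n → Bool, tilt n p q r σ σ')
      = ∑ c : Fin n → Bool × Bool, ∏ i, Real.exp ((p * (spin (c i).1 * spin (c i).2)
    + q * spin (c i).1 + r * spin (c i).2) / Real.sqrt n) := by
    rw [← Fintype.sum_prod_type']
    symm
    apply Fintype.sum_equiv (Equiv.arrowProdEquivProdArrow (Fin n) (fun _ => Bool) (fun _ => Bool))
    intro c
    rw [← Real.exp_sum, tilt]
    congr 1
    simp only [overlapSum, spinSum, Equiv.arrowProdEquivProdArrow, Equiv.coe_fn_mk]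
    rw [← Finset.sum_div]
    simp only [Finset.mul_sum, Finset.sum_add_distrib]
  rw [jointMgf, h2, ← h, ← mul_inv, ← mul_pow, ← inv_pow, ← mul_pow]
  congr 1
  simp only [Fintype.sum_prod_type, Fintype.sum_bool, spin]
  norm_num
  ring_nf

lemma tendsto_exp_second (c : ℝ) :
    Tendsto (fun n : ℕ => (n : ℝ) * (Real.exp (c / Real.sqrt n) - 1 - c / Real.sqrt n)) atTop
      (𝓝 (c ^ 2 / 2)) := by
  have hs : Tendsto (fun n : ℕ => Real.sqrt n) atTop atTop :=
    Real.tendsto_sqrt_atTop.comp tendsto_natCast_atTop_atTop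
  have h0 : Tendsto (fun n : ℕ => |c| ^ 3 * (Real.sqrt n)⁻¹) atTop (𝓝 0) := by
    simpa using hs.inv_tendsto_atTop.const_mul (|c| ^ 3)
  rw [tendsto_iff_norm_sub_tendsto_zero]
  refine squeeze_zero' (Eventually.of_forall fun _ => norm_nonneg _) ?_ h0
  filter_upwards [hs.eventually_ge_atTop (|c| + 1)] with n hn
  have hs0 : 0 < Real.sqrt n := by linarith [abs_nonneg c]
  have hss : Real.sqrt n ^ 2 = n := Real.sq_sqrt (by positivity)
  set s := Real.sqrt n with hsdef
  have hx : |c / s| ≤ 1 := by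
    rw [abs_div, abs_of_pos hs0, div_le_one hs0]
    linarith
  have hb := Real.exp_bound hx (n := 3) (by norm_num)
  have e1 : ∑ m ∈ Finset.range 3, (c / s) ^ m / (m.factorial : ℝ)
      = 1 + c / s + (c / s) ^ 2 / 2 := by
    simp [Finset.sum_range_succ, Nat.factorial]
  rw [e1] at hb
  have e2 : (n : ℝ) * (Real.exp (c / s) - 1 - c / s) - c ^ 2 / 2
      = s ^ 2 * (Real.exp (c / s) - (1 + c / s + (c / s) ^ 2 / 2)) := by
    rw [← hss]
    field_simp
    ring
  rw [e2, Real.norm_eq_abs, abs_mul, abs_of_pos (by positivity : 0 < s ^ 2)]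
  have hb2 : |Real.exp (c / s) - (1 + c / s + (c / s) ^ 2 / 2)| ≤ |c / s| ^ 3 := by
    refine hb.trans ?_
    have : 0 ≤ |c / s| ^ 3 := by positivity
    norm_num [Nat.factorial]
    linarith
  refine (mul_le_mul_of_nonneg_left hb2 (by positivity)).trans (le_of_eq ?_)
  rw [abs_div, abs_of_pos hs0]
  field_simp

lemma tendsto_jointMgf (p q r : ℝ) :
    Tendsto (fun n : ℕ => jointMgf n p q r) atTop
      (𝓝 (Real.exp ((p ^ 2 + q ^ 2 + r ^ 2) / 2))) := by
  simp only [jointMgf_eq]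
  apply Real.tendsto_one_add_pow_exp_of_tendsto
  have h := ((((tendsto_exp_second (p + q + r)).add (tendsto_exp_second (-p + q - r))).add
    (tendsto_exp_second (-p - q + r))).add (tendsto_exp_second (p - q - r))).const_mul (1 / 4)
  convert h using 2 <;> ring

lemma tilt_pos (n : ℕ) (p q r : ℝ) (σ σ' : Fin n → Bool) : 0 < tilt n p q r σ σ' := Real.exp_pos _

lemma trunc_le_joint (n : ℕ) (d p q r : ℝ) : truncMgf n d p q r ≤ jointMgf n p q r := by
  unfold truncMgf jointMgf
  gcongr with σ _ σ' _
  split_ifs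
  · exact le_rfl
  · exact (tilt_pos _ _ _ _ _ _).le

lemma tilt_bad (n : ℕ) (hn : 0 < n) (d p q r : ℝ) (σ σ' : Fin n → Bool)
    (h : ¬ (|spinSum n σ| ≤ n * d ∧ |spinSum n σ'| ≤ n * d)) :
    tilt n p q r σ σ' ≤ Real.exp (-(Real.sqrt n * d)) *
      (tilt n p (q + 1) r σ σ' + tilt n p (q - 1) r σ σ'
        + tilt n p q (r + 1) σ σ' + tilt n p q (r - 1) σ σ') := by
  have hs : 0 < Real.sqrt n := Real.sqrt_pos.mpr (by exact_mod_cast hn)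
  have hss : Real.sqrt n * Real.sqrt n = n := Real.mul_self_sqrt (by positivity)
  have key : ∀ (S x y : ℝ), Real.sqrt n * Real.sqrt n * d < S → y = x + S →
      Real.exp (x / Real.sqrt n) ≤ Real.exp (-(Real.sqrt n * d)) * Real.exp (y / Real.sqrt n) := by
    intro S x y h1 hy
    rw [← Real.exp_add]
    apply Real.exp_le_exp.mpr
    rw [hy, add_div]
    have : Real.sqrt n * d ≤ S / Real.sqrt n := by
      rw [le_div_iff₀ hs]; nlinarith
    linarith
  have e := Real.exp_pos (-(Real.sqrt n * d))
  have t1 := mul_pos e (tilt_pos n p (q + 1) r σ σ')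
  have t2 := mul_pos e (tilt_pos n p (q - 1) r σ σ')
  have t3 := mul_pos e (tilt_pos n p q (r + 1) σ σ')
  have t4 := mul_pos e (tilt_pos n p q (r - 1) σ σ')
  rw [not_and_or, not_le, not_le, lt_abs, lt_abs, ← hss] at h
  rw [mul_add, mul_add, mul_add]
  rcases h with (h | h) | (h | h)
  · have : tilt n p q r σ σ' ≤ _ * tilt n p (q + 1) r σ σ' := key _ _ _ h (by ring)
    linarith
  · have : tilt n p q r σ σ' ≤ _ * tilt n p (q - 1) r σ σ' := key _ _ _ h (by ring)
    linarith
  · have : tilt n p q r σ σ' ≤ _ * tilt n p q (r + 1) σ σ' := key _ _ _ h (by ring)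
    linarith
  · have : tilt n p q r σ σ' ≤ _ * tilt n p q (r - 1) σ σ' := key _ _ _ h (by ring)
    linarith

lemma joint_le_trunc (n : ℕ) (hn : 0 < n) (d p q r : ℝ) :
    jointMgf n p q r - Real.exp (-(Real.sqrt n * d)) *
      (jointMgf n p (q + 1) r + jointMgf n p (q - 1) r
        + jointMgf n p q (r + 1) + jointMgf n p q (r - 1)) ≤ truncMgf n d p q r := by
  have h : ∑ σ : Fin n → Bool, ∑ σ' : Fin n → Bool, (tilt n p q r σ σ' -
      Real.exp (-(Real.sqrt n * d)) *
      (tilt n p (q + 1) r σ σ' + tilt n p (q - 1) r σ σ'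
        + tilt n p q (r + 1) σ σ' + tilt n p q (r - 1) σ σ')) ≤
      ∑ σ : Fin n → Bool, ∑ σ' : Fin n → Bool,
    if |spinSum n σ| ≤ n * d ∧ |spinSum n σ'| ≤ n * d then tilt n p q r σ σ' else 0 := by
    gcongr with σ _ σ' _
    split_ifs with h
    · have e := Real.exp_pos (-(Real.sqrt n * d))
      have t1 := mul_pos e (tilt_pos n p (q + 1) r σ σ')
      have t2 := mul_pos e (tilt_pos n p (q - 1) r σ σ')
      have t3 := mul_pos e (tilt_pos n p q (r + 1) σ σ')
      have t4 := mul_pos e (tilt_pos n p q (r - 1) σ σ')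
      linarith
    · linarith [tilt_bad n hn d p q r σ σ' h]
  have h' := mul_le_mul_of_nonneg_left h
    (by positivity : 0 ≤ ((2 : ℝ) ^ n)⁻¹ * ((2 : ℝ) ^ n)⁻¹)
  refine le_trans (le_of_eq ?_) h'
  simp only [jointMgf, Finset.sum_sub_distrib, ← Finset.mul_sum, Finset.sum_add_distrib]
  ring

lemma tendsto_truncMgf (δ : ℕ → ℝ)
    (hδ' : Tendsto (fun n : ℕ => Real.sqrt n * δ n) atTop atTop) (p q r : ℝ) :
    Tendsto (fun n : ℕ => truncMgf n (δ n) p q r) atTop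
      (𝓝 (Real.exp ((p ^ 2 + q ^ 2 + r ^ 2) / 2))) := by
  have he : Tendsto (fun n : ℕ => Real.exp (-(Real.sqrt n * δ n))) atTop (𝓝 0) :=
    Real.tendsto_exp_neg_atTop_nhds_zero.comp hδ'
  have h1 := (tendsto_jointMgf p q r).sub (he.mul ((((tendsto_jointMgf p (q + 1) r).add
    (tendsto_jointMgf p (q - 1) r)).add (tendsto_jointMgf p q (r + 1))).add
    (tendsto_jointMgf p q (r - 1))))
  rw [zero_mul, sub_zero] at h1
  refine tendsto_of_tendsto_of_tendsto_of_le_of_le' h1 (tendsto_jointMgf p q r) ?_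
    (Eventually.of_forall fun n => trunc_le_joint _ _ _ _ _)
  filter_upwards [eventually_gt_atTop 0] with n hn
  exact joint_le_trunc n hn _ _ _ _

lemma sum_exp_spin_le (n : ℕ) (x : Fin n → ℝ) :
    ((2 : ℝ) ^ n)⁻¹ * ∑ σ : Fin n → Bool, Real.exp (∑ i, x i * spin (σ i))
      ≤ Real.exp ((∑ i, x i ^ 2) / 2) := by
  have h : ∑ σ : Fin n → Bool, Real.exp (∑ i, x i * spin (σ i))
      = ∏ i, ∑ b : Bool, Real.exp (x i * spin b) := by
    rw [Finset.prod_univ_sum, Fintype.piFinset_univ]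
    simp only [Real.exp_sum]
  have h2 : ((2 : ℝ) ^ n)⁻¹ = ∏ _i : Fin n, (2 : ℝ)⁻¹ := by simp
  rw [h, h2, ← Finset.prod_mul_distrib, Finset.sum_div, Real.exp_sum]
  apply Finset.prod_le_prod
  · intro i _
    positivity
  · intro i _
    refine le_trans (le_of_eq ?_) (Real.cosh_le_exp_half_sq (x i))
    rw [Real.cosh_eq]
    simp [spin]
    ring

lemma spin_sq (b : Bool) : spin b ^ 2 = 1 := by cases b <;> simp [spin]

lemma truncMgf_nonneg (n : ℕ) (d p q r : ℝ) : 0 ≤ truncMgf n d p q r := by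
  unfold truncMgf
  refine mul_nonneg (by positivity) (Finset.sum_nonneg fun σ _ => Finset.sum_nonneg fun σ' _ => ?_)
  split_ifs
  · exact (tilt_pos _ _ _ _ _ _).le
  · exact le_rfl

lemma truncMgf_le (n : ℕ) (hn : 0 < n) (d ε p q r : ℝ) (hd : d ≤ ε) :
    truncMgf n d p q r ≤
      Real.exp (q ^ 2 / 2) * Real.exp ((p ^ 2 + r ^ 2) / 2 + |p * r| * ε) := by
  have hs : 0 < Real.sqrt n := Real.sqrt_pos.mpr (by exact_mod_cast hn)
  have hn' : (0 : ℝ) < n := by exact_mod_cast hn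
  have hss : Real.sqrt n ^ 2 = n := Real.sq_sqrt (by positivity)
  have inner : ∀ σ : Fin n → Bool, ((2 : ℝ) ^ n)⁻¹ * (∑ σ' : Fin n → Bool,
      if |spinSum n σ| ≤ n * d ∧ |spinSum n σ'| ≤ n * d then tilt n p q r σ σ' else 0)
      ≤ Real.exp (∑ i, (q / Real.sqrt n) * spin (σ i)) *
        Real.exp ((p ^ 2 + r ^ 2) / 2 + |p * r| * ε) := by
    intro σ
    by_cases hσ : |spinSum n σ| ≤ n * d
    · have h1 : (∑ σ' : Fin n → Bool,
          if |spinSum n σ| ≤ n * d ∧ |spinSum n σ'| ≤ n * d then tilt n p q r σ σ' else 0)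
          ≤ ∑ σ' : Fin n → Bool, tilt n p q r σ σ' := by
        gcongr with σ' _
        split_ifs
        · exact le_rfl
        · exact (tilt_pos _ _ _ _ _ _).le
      have h2 : ∀ σ' : Fin n → Bool, tilt n p q r σ σ' =
          Real.exp (∑ i, (q / Real.sqrt n) * spin (σ i)) *
          Real.exp (∑ i, ((p * spin (σ i) + r) / Real.sqrt n) * spin (σ' i)) := by
        intro σ'
        rw [← Real.exp_add, ← Finset.sum_add_distrib, tilt]
        congr 1
        simp only [overlapSum, spinSum, Finset.mul_sum, ← Finset.sum_add_distrib, Finset.sum_div]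
        refine Finset.sum_congr rfl fun i _ => ?_
        ring
      have h3 := sum_exp_spin_le n (fun i => (p * spin (σ i) + r) / Real.sqrt n)
      have h4 : (∑ i, ((p * spin (σ i) + r) / Real.sqrt n) ^ 2) / 2
          = (p ^ 2 + r ^ 2) / 2 + p * r * (spinSum n σ / n) := by
        have : ∀ i, ((p * spin (σ i) + r) / Real.sqrt n) ^ 2
            = (p ^ 2 + r ^ 2) / n + (2 * p * r / n) * spin (σ i) := by
          intro i
          rw [div_pow, hss]
          have := spin_sq (σ i)
          field_simp
          linear_combination p ^ 2 * this
        simp only [this, Finset.sum_add_distrib, ← Finset.mul_sum, spinSum]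
        simp
        field_simp
      have h5 : p * r * (spinSum n σ / n) ≤ |p * r| * ε := by
        refine (le_abs_self _).trans ?_
        rw [abs_mul, abs_div, abs_of_pos hn']
        gcongr
        rw [div_le_iff₀ hn']
        nlinarith
      calc _ ≤ ((2 : ℝ) ^ n)⁻¹ * ∑ σ' : Fin n → Bool, tilt n p q r σ σ' := by gcongr
        _ = Real.exp (∑ i, (q / Real.sqrt n) * spin (σ i)) * (((2 : ℝ) ^ n)⁻¹ *
          ∑ σ' : Fin n → Bool, 
            Real.exp (∑ i, ((p * spin (σ i) + r) / Real.sqrt n) * spin (σ' i))) := by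
          simp only [h2, ← Finset.mul_sum]
          ring
        _ ≤ _ := by
          gcongr
          refine h3.trans (Real.exp_le_exp.mpr ?_)
          rw [h4]
          linarith
    · simp only [hσ, false_and, if_false]
      simp
      positivity
  have outer := sum_exp_spin_le n (fun _ => q / Real.sqrt n)
  have h6 : (∑ _i : Fin n, (q / Real.sqrt n) ^ 2) / 2 = q ^ 2 / 2 := by
    rw [div_pow, hss]
    simp
    field_simp
  rw [h6] at outer
  unfold truncMgf
  rw [mul_assoc]
  calc _ ≤ ((2 : ℝ) ^ n)⁻¹ * ∑ σ : Fin n → Bool, 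
        (Real.exp (∑ i, (q / Real.sqrt n) * spin (σ i)) *
        Real.exp ((p ^ 2 + r ^ 2) / 2 + |p * r| * ε)) := by
        refine mul_le_mul_of_nonneg_left ?_ (by positivity)
        rw [Finset.mul_sum]
        exact Finset.sum_le_sum fun σ _ => inner σ
    _ = (((2 : ℝ) ^ n)⁻¹ * ∑ σ : Fin n → Bool, 
        Real.exp (∑ i, (q / Real.sqrt n) * spin (σ i))) *
        Real.exp ((p ^ 2 + r ^ 2) / 2 + |p * r| * ε) := by
        rw [← Finset.sum_mul, mul_assoc]
    _ ≤ _ := by gcongr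

/-- Standard Gaussian measure. -/
abbrev stdG : Measure ℝ := ProbabilityTheory.gaussianReal 0 1

lemma pdf_mul (c x : ℝ) : ProbabilityTheory.gaussianPDFReal 0 1 x * Real.exp (c * x ^ 2 / 2)
    = (Real.sqrt (2 * Real.pi))⁻¹ * Real.exp (-((1 - c) / 2) * x ^ 2) := by
  rw [ProbabilityTheory.gaussianPDFReal_def]
  simp only [NNReal.coe_one, mul_one, sub_zero]
  rw [mul_assoc, ← Real.exp_add]
  congr 2
  ring

lemma integrable_sq (c : ℝ) (hc : c < 1) :
    Integrable (fun x : ℝ => Real.exp (c * x ^ 2 / 2)) stdG := by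
  rw [stdG, ProbabilityTheory.gaussianReal_of_var_ne_zero 0 one_ne_zero,
    integrable_withDensity_iff_integrable_smul'
      (ProbabilityTheory.measurable_gaussianPDF 0 1)
      (Eventually.of_forall fun x => ENNReal.ofReal_lt_top)]
  have : ∀ x : ℝ, (ProbabilityTheory.gaussianPDF 0 1 x).toReal • Real.exp (c * x ^ 2 / 2)
    = (Real.sqrt (2 * Real.pi))⁻¹ * Real.exp (-((1 - c) / 2) * x ^ 2) := by
    intro x
    rw [← pdf_mul, ProbabilityTheory.gaussianPDF,
      ENNReal.toReal_ofReal (ProbabilityTheory.gaussianPDFReal_nonneg _ _ _), smul_eq_mul]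
  simp only [this]
  exact (integrable_exp_neg_mul_sq (by linarith)).const_mul _

lemma integral_sq (c : ℝ) (hc : c < 1) :
    ∫ x : ℝ, Real.exp (c * x ^ 2 / 2) ∂stdG = 1 / Real.sqrt (1 - c) := by
  rw [stdG, ProbabilityTheory.integral_gaussianReal_eq_integral_smul one_ne_zero]
  simp only [smul_eq_mul, pdf_mul]
  rw [integral_const_mul, integral_gaussian, ← Real.sqrt_inv, ← Real.sqrt_mul (by positivity),
    one_div, ← Real.sqrt_inv]
  congr 1
  have : (1 - c) ≠ 0 := by linarith
  have := Real.pi_ne_zero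
  field_simp

lemma integral_lin (t : ℝ) : ∫ x : ℝ, Real.exp (t * x) ∂stdG = Real.exp (t ^ 2 / 2) := by
  have h := ProbabilityTheory.mgf_gaussianReal (p := stdG) (X := id) (μ := 0) (v := 1)
    Measure.map_id t
  simpa [ProbabilityTheory.mgf] using h

lemma exp_three (a b c : ℝ) (z : ℝ × ℝ × ℝ) :
    Real.exp (a * z.1 + b * z.2.1 + c * z.2.2) =
      Real.exp (a * z.1) * (Real.exp (b * z.2.1) * Real.exp (c * z.2.2)) := by
  rw [← Real.exp_add, ← Real.exp_add, add_assoc]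

lemma integrable_three (a b c : ℝ) :
    Integrable (fun z : ℝ × ℝ × ℝ => Real.exp (a * z.1 + b * z.2.1 + c * z.2.2))
      (stdG.prod (stdG.prod stdG)) := by
  simp only [exp_three]
  exact Integrable.mul_prod (f := fun x => Real.exp (a * x))
    (g := fun y : ℝ × ℝ => Real.exp (b * y.1) * Real.exp (c * y.2))
    (ProbabilityTheory.integrable_exp_mul_gaussianReal a)
    (Integrable.mul_prod (f := fun x => Real.exp (b * x)) (g := fun x => Real.exp (c * x))
      (ProbabilityTheory.integrable_exp_mul_gaussianReal b)
      (ProbabilityTheory.integrable_exp_mul_gaussianReal c))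

lemma integral_three (a b c : ℝ) :
    ∫ z : ℝ × ℝ × ℝ, Real.exp (a * z.1 + b * z.2.1 + c * z.2.2) ∂(stdG.prod (stdG.prod stdG))
      = Real.exp (a ^ 2 / 2 + b ^ 2 / 2 + c ^ 2 / 2) := by
  simp only [exp_three]
  rw [integral_prod_mul (fun x => Real.exp (a * x))
    (fun y : ℝ × ℝ => Real.exp (b * y.1) * Real.exp (c * y.2)),
    integral_prod_mul (fun x => Real.exp (b * x)) (fun x => Real.exp (c * x)),
    integral_lin, integral_lin, integral_lin, ← Real.exp_add, ← Real.exp_add, add_assoc]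

lemma exp_three_sq (a b c : ℝ) (z : ℝ × ℝ × ℝ) :
    Real.exp (a * z.1 ^ 2 / 2 + b * z.2.1 ^ 2 / 2 + c * z.2.2 ^ 2 / 2) =
      Real.exp (a * z.1 ^ 2 / 2) * (Real.exp (b * z.2.1 ^ 2 / 2) *
        Real.exp (c * z.2.2 ^ 2 / 2)) := by
  rw [← Real.exp_add, ← Real.exp_add, add_assoc]

lemma integrable_three_sq (a b c : ℝ) (ha : a < 1) (hb : b < 1) (hc : c < 1) :
    Integrable (fun z : ℝ × ℝ × ℝ =>
      Real.exp (a * z.1 ^ 2 / 2 + b * z.2.1 ^ 2 / 2 + c * z.2.2 ^ 2 / 2))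
      (stdG.prod (stdG.prod stdG)) := by
  simp only [exp_three_sq]
  exact Integrable.mul_prod (f := fun x => Real.exp (a * x ^ 2 / 2))
    (g := fun y : ℝ × ℝ => Real.exp (b * y.1 ^ 2 / 2) * Real.exp (c * y.2 ^ 2 / 2))
    (integrable_sq a ha)
    (Integrable.mul_prod (f := fun x => Real.exp (b * x ^ 2 / 2))
      (g := fun x => Real.exp (c * x ^ 2 / 2)) (integrable_sq b hb) (integrable_sq c hc))

lemma integral_three_sq (a b c : ℝ) (ha : a < 1) (hb : b < 1) (hc : c < 1) :
    ∫ z : ℝ × ℝ × ℝ, Real.exp (a * z.1 ^ 2 / 2 + b * z.2.1 ^ 2 / 2 + c * z.2.2 ^ 2 / 2)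
      ∂(stdG.prod (stdG.prod stdG))
      = 1 / Real.sqrt (1 - a) * (1 / Real.sqrt (1 - b) * (1 / Real.sqrt (1 - c))) := by
  simp only [exp_three_sq]
  rw [integral_prod_mul (fun x => Real.exp (a * x ^ 2 / 2))
    (fun y : ℝ × ℝ => Real.exp (b * y.1 ^ 2 / 2) * Real.exp (c * y.2 ^ 2 / 2)),
    integral_prod_mul (fun x => Real.exp (b * x ^ 2 / 2)) (fun x => Real.exp (c * x ^ 2 / 2)),
    integral_sq a ha, integral_sq b hb, integral_sq c hc]

lemma tilt_linear (n : ℕ) (α γ : ℝ) (σ σ' : Fin n → Bool) (z : ℝ × ℝ × ℝ) :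
    tilt n (α * z.1) (γ * z.2.1) (γ * z.2.2) σ σ' =
      Real.exp ((α * overlapSum n σ σ' / Real.sqrt n) * z.1
        + (γ * spinSum n σ / Real.sqrt n) * z.2.1 + (γ * spinSum n σ' / Real.sqrt n) * z.2.2) := by
  rw [tilt]
  congr 1
  ring

lemma integrable_term (n : ℕ) (d α γ : ℝ) (σ σ' : Fin n → Bool) :
    Integrable (fun z : ℝ × ℝ × ℝ => if |spinSum n σ| ≤ n * d ∧ |spinSum n σ'| ≤ n * d then
      tilt n (α * z.1) (γ * z.2.1) (γ * z.2.2) σ σ' else 0) (stdG.prod (stdG.prod stdG)) := by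
  split_ifs
  · simp only [tilt_linear]
    exact integrable_three _ _ _
  · exact integrable_zero _ _ _

lemma integrable_trunc (n : ℕ) (d α γ : ℝ) :
    Integrable (fun z : ℝ × ℝ × ℝ => truncMgf n d (α * z.1) (γ * z.2.1) (γ * z.2.2))
      (stdG.prod (stdG.prod stdG)) := by
  unfold truncMgf
  exact (integrable_finsetSum _ fun σ _ => integrable_finsetSum _ fun σ' _ =>
    integrable_term n d α γ σ σ').const_mul _

lemma integral_trunc (n : ℕ) (d α γ : ℝ) :
    ∫ z : ℝ × ℝ × ℝ, truncMgf n d (α * z.1) (γ * z.2.1) (γ * z.2.2)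
      ∂(stdG.prod (stdG.prod stdG)) =
    ((2 : ℝ) ^ n)⁻¹ * ((2 : ℝ) ^ n)⁻¹ * ∑ σ : Fin n → Bool, ∑ σ' : Fin n → Bool,
      if |spinSum n σ| ≤ n * d ∧ |spinSum n σ'| ≤ n * d then
        Real.exp ((α * overlapSum n σ σ' / Real.sqrt n) ^ 2 / 2
          + (γ * spinSum n σ / Real.sqrt n) ^ 2 / 2
          + (γ * spinSum n σ' / Real.sqrt n) ^ 2 / 2) else 0 := by
  unfold truncMgf
  rw [integral_const_mul, integral_finsetSum _ fun σ _ => integrable_finsetSum _ fun σ' _ =>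
    integrable_term n d α γ σ σ']
  congr 1
  refine Finset.sum_congr rfl fun σ _ => ?_
  rw [integral_finsetSum _ fun σ' _ => integrable_term n d α γ σ σ']
  refine Finset.sum_congr rfl fun σ' _ => ?_
  split_ifs
  · simp only [tilt_linear]
    exact integral_three _ _ _
  · simp

lemma tendsto_integral_trunc (α γ : ℝ) (hα0 : 0 ≤ α) (hγ0 : 0 ≤ γ) (hα : α ^ 2 < 1)
    (hγ : γ ^ 2 < 1) (δ : ℕ → ℝ) (hδ : Tendsto δ atTop (𝓝 0))
    (hδ' : Tendsto (fun n : ℕ => Real.sqrt n * δ n) atTop atTop) :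
    Tendsto (fun n : ℕ => ∫ z : ℝ × ℝ × ℝ, truncMgf n (δ n) (α * z.1) (γ * z.2.1) (γ * z.2.2)
      ∂(stdG.prod (stdG.prod stdG))) atTop
      (𝓝 (1 / Real.sqrt (1 - α ^ 2) *
        (1 / Real.sqrt (1 - γ ^ 2) * (1 / Real.sqrt (1 - γ ^ 2))))) := by
  rw [← integral_three_sq _ _ _ hα hγ hγ]
  obtain ⟨ε, hε, h1, h2⟩ : ∃ ε : ℝ, 0 < ε ∧ α ^ 2 + α * γ * ε < 1 ∧ γ ^ 2 + α * γ * ε < 1 := by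
    have hm : 0 < min (1 - α ^ 2) (1 - γ ^ 2) := lt_min (by linarith) (by linarith)
    have hp : 0 ≤ α * γ := mul_nonneg hα0 hγ0
    have hlt : α * γ * (min (1 - α ^ 2) (1 - γ ^ 2) / (α * γ + 1))
        < min (1 - α ^ 2) (1 - γ ^ 2) := by
      rw [mul_div_assoc', div_lt_iff₀ (by linarith)]
      nlinarith
    refine ⟨min (1 - α ^ 2) (1 - γ ^ 2) / (α * γ + 1), by positivity, ?_, ?_⟩
    · linarith [min_le_left (1 - α ^ 2) (1 - γ ^ 2)]
    · linarith [min_le_right (1 - α ^ 2) (1 - γ ^ 2)]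
  refine tendsto_integral_filter_of_dominated_convergence
    (fun z : ℝ × ℝ × ℝ => Real.exp ((α ^ 2 + α * γ * ε) * z.1 ^ 2 / 2 + γ ^ 2 * z.2.1 ^ 2 / 2
      + (γ ^ 2 + α * γ * ε) * z.2.2 ^ 2 / 2)) ?_ ?_ (integrable_three_sq _ _ _ h1 hγ h2) ?_
  · exact Eventually.of_forall fun n => (integrable_trunc n (δ n) α γ).aestronglyMeasurable
  · filter_upwards [hδ.eventually_le_const hε, eventually_gt_atTop 0] with n hn hn0
    refine Eventually.of_forall fun z => ?_
    rw [Real.norm_eq_abs, abs_of_nonneg (truncMgf_nonneg _ _ _ _ _)]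
    refine (truncMgf_le n hn0 (δ n) ε _ _ _ hn).trans ?_
    rw [← Real.exp_add]
    apply Real.exp_le_exp.mpr
    have hp : 0 ≤ α * γ * ε := by positivity
    have h3 : |α * z.1 * (γ * z.2.2)| = α * γ * (|z.1| * |z.2.2|) := by
      rw [abs_mul, abs_mul, abs_mul, abs_of_nonneg hα0, abs_of_nonneg hγ0]
      ring
    have h4 : |z.1| * |z.2.2| ≤ (z.1 ^ 2 + z.2.2 ^ 2) / 2 := by
      have := sq_nonneg (|z.1| - |z.2.2|)
      rw [← sq_abs z.1, ← sq_abs z.2.2]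
      linarith
    rw [h3]
    have h5 := mul_le_mul_of_nonneg_left h4 hp
    linarith
  · refine Eventually.of_forall fun z => ?_
    have h := tendsto_truncMgf δ hδ' (α * z.1) (γ * z.2.1) (γ * z.2.2)
    convert h using 3
    ring

/-- **Limit of the truncated replica expectation.**
Let `σ, σ'` be independent uniform on `{−1,+1}^n`, `δ_n → 0` with `√n δ_n → ∞`, and
`Ω_n = {τ : |Σ_i τ_i| ≤ n δ_n}`. For `0 < β < 1/2`, `J ≥ 0`, `βJ < 1/2`,
`E[1_{σ ∈ Ω_n} 1_{σ' ∈ Ω_n} exp{(2β²/n)(Σ σ_i σ'_i)² + (βJ/n)(Σ σ_i)² + (βJ/n)(Σ σ'_i)²}]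
  → 1/(√(1 − 4β²)(1 − 2βJ))`. -/
theorem replica_expectation_limit (β J : ℝ) (hβ0 : 0 < β) (hβ : β < 1 / 2)
    (hJ : 0 ≤ J) (hβJ : β * J < 1 / 2) (δ : ℕ → ℝ) (hδ : Tendsto δ atTop (𝓝 0))
    (hδ' : Tendsto (fun n : ℕ => Real.sqrt n * δ n) atTop atTop) :
    Tendsto
      (fun n : ℕ =>
        ((2 : ℝ) ^ n)⁻¹ * ((2 : ℝ) ^ n)⁻¹ *
          ∑ σ : Fin n → Bool, ∑ σ' : Fin n → Bool,
            if |∑ i : Fin n, spin (σ i)| ≤ n * δ n ∧ |∑ i : Fin n, spin (σ' i)| ≤ n * δ n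
            then
              Real.exp
                ((2 * β ^ 2 / n) * (∑ i : Fin n, spin (σ i) * spin (σ' i)) ^ 2
                  + (β * J / n) * (∑ i : Fin n, spin (σ i)) ^ 2
                  + (β * J / n) * (∑ i : Fin n, spin (σ' i)) ^ 2)
            else 0)
      atTop (𝓝 (1 / (Real.sqrt (1 - 4 * β ^ 2) * (1 - 2 * β * J)))) := by
  have hg : Real.sqrt (2 * β * J) ^ 2 = 2 * β * J := Real.sq_sqrt (by positivity)
  have h := tendsto_integral_trunc (2 * β) (Real.sqrt (2 * β * J)) (by positivity)
    (Real.sqrt_nonneg _) (by nlinarith) (by rw [hg]; linarith) δ hδ hδ'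
  simp only [integral_trunc] at h
  convert h using 2
  · rename_i n
    have hn : Real.sqrt n ^ 2 = n := Real.sq_sqrt (by positivity)
    congr 1
    refine Finset.sum_congr rfl fun σ _ => Finset.sum_congr rfl fun σ' _ => ?_
    simp only [spinSum, overlapSum, div_pow, mul_pow, hn, hg]
    congr 2
    ring
  · have h1 : (2 * β) ^ 2 = 4 * β ^ 2 := by ring
    have h2 : (1 : ℝ) / Real.sqrt (1 - 2 * β * J) * (1 / Real.sqrt (1 - 2 * β * J))
        = 1 / (1 - 2 * β * J) := by
      rw [one_div_mul_one_div, Real.mul_self_sqrt (by linarith)]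
    rw [hg, h1, h2, one_div_mul_one_div]

end
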